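/- Let p, q > 1 and a ≥ 1. Then sin_{p,q} is (a,a)-concave on (0,1): for all r, s ∈ (0,1), sin_{p,q}(((r^a + s^a)/2)^{1/a}) ≥ ((sin_{p,q}(r)^a + sin_{p,q}(s)^a)/2)^{1/a}. -/

import Mathlib

open Real Set

/-- `arcsinPQ p q x = ∫₀ˣ (1 - tᵠ)^(-1/p) dt`, the generalized inverse sine. -/
noncomputable def arcsinPQ (p q x : ℝ) : ℝ := ∫ t in (0:ℝ)..x, (1 - t ^ q) ^ (-(1/p))

/-- `sinPQ p q` is the inverse function of `arcsinPQ p q` (restricted to `[0,1]`). -/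
noncomputable def sinPQ (p q : ℝ) : ℝ → ℝ := Function.invFunOn (arcsinPQ p q) (Set.Icc 0 1)

/-! By Hölder's inequality, the power mean `m` of `u` and `v` can be written as `α * u + β * v`
with nonnegative weights such that `α * x + β * y` is at most the power mean of `x` and `y`, for all
`x, y ≥ 0`. In particular (`x = y = 1`) `α + β ≤ 1`, so a convex function `f ≥ 0` with `f 0 = 0`
satisfies `f m ≤ α * f u + β * f v`, which is at most the power mean of `f u` and `f v`.
This applies to `arcsinPQ p q`, whose derivative is increasing on `[0, 1)`, and the inverse of a
strictly increasing `(a, a)`-convex function is `(a, a)`-concave. -/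

/-- The power mean `M_a(x, y)` of two nonnegative numbers, for an exponent `a ≠ 0`. -/
noncomputable def powerMean (a x y : ℝ) : ℝ := ((x ^ a + y ^ a) / 2) ^ (1 / a)

/-- `(a, b)`-convexity of `f` on `s`: `f` takes the power mean of exponent `a` to at most the power
mean of exponent `b`. The set `s` is not required to be closed under power means. -/
def PowerConvexOn (s : Set ℝ) (a b : ℝ) (f : ℝ → ℝ) : Prop :=
  ∀ ⦃x⦄, x ∈ s → ∀ ⦃y⦄, y ∈ s → f (powerMean a x y) ≤ powerMean b (f x) (f y)

/-- `(a, b)`-concavity of `f` on `s`, with the inequality of `PowerConvexOn` reversed. -/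
def PowerConcaveOn (s : Set ℝ) (a b : ℝ) (f : ℝ → ℝ) : Prop :=
  ∀ ⦃x⦄, x ∈ s → ∀ ⦃y⦄, y ∈ s → powerMean b (f x) (f y) ≤ f (powerMean a x y)

section PowerMean

variable {a x y : ℝ}

theorem powerMean_nonneg (hx : 0 ≤ x) (hy : 0 ≤ y) : 0 ≤ powerMean a x y := by
  unfold powerMean
  positivity

theorem powerMean_self (ha : a ≠ 0) (hx : 0 ≤ x) : powerMean a x x = x := by
  rw [powerMean, add_self_div_two, one_div, rpow_rpow_inv hx ha]

theorem powerMean_le_powerMean {x' y' : ℝ} (ha : 0 ≤ a) (hx : 0 ≤ x) (hy : 0 ≤ y)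
    (hxx' : x ≤ x') (hyy' : y ≤ y') : powerMean a x y ≤ powerMean a x' y' := by
  unfold powerMean
  gcongr

theorem powerMean_mem_uIcc (ha : 0 < a) (hx : 0 ≤ x) (hy : 0 ≤ y) :
    powerMean a x y ∈ uIcc x y := by
  have hmin : 0 ≤ min x y := le_min hx hy
  constructor
  · calc min x y = powerMean a (min x y) (min x y) := (powerMean_self ha.ne' hmin).symm
      _ ≤ powerMean a x y :=
        powerMean_le_powerMean ha.le hmin hmin (min_le_left x y) (min_le_right x y)
  · calc powerMean a x y ≤ powerMean a (max x y) (max x y) :=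
        powerMean_le_powerMean ha.le hx hy (le_max_left x y) (le_max_right x y)
      _ = max x y := powerMean_self ha.ne' (hx.trans (le_max_left x y))

theorem powerMean_rpow (ha : a ≠ 0) (hx : 0 ≤ x) (hy : 0 ≤ y) :
    powerMean a x y ^ a = (x ^ a + y ^ a) / 2 := by
  rw [powerMean, one_div, rpow_inv_rpow (by positivity) ha]

theorem powerMean_eq_zero_iff (ha : 0 < a) (hx : 0 ≤ x) (hy : 0 ≤ y) :
    powerMean a x y = 0 ↔ x = 0 ∧ y = 0 := by
  rw [← rpow_eq_zero (powerMean_nonneg hx hy) ha.ne', powerMean_rpow ha.ne' hx hy,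
    div_eq_zero_iff, or_iff_left two_ne_zero,
    add_eq_zero_iff_of_nonneg (rpow_nonneg hx a) (rpow_nonneg hy a), rpow_eq_zero hx ha.ne',
    rpow_eq_zero hy ha.ne']

theorem div_powerMean_rpow_add_div_powerMean_rpow (ha : a ≠ 0) (hx : 0 ≤ x) (hy : 0 ≤ y)
    (hxy : powerMean a x y ≠ 0) :
    (x / powerMean a x y) ^ a + (y / powerMean a x y) ^ a = 2 := by
  have hm := powerMean_nonneg (a := a) hx hy
  have hma : powerMean a x y ^ a ≠ 0 := (rpow_ne_zero hm ha).2 hxy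
  rw [div_rpow hx hm, div_rpow hy hm, ← add_div, div_eq_iff hma, powerMean_rpow ha hx hy]
  ring

end PowerMean

section Hoelder

variable {a u v x y : ℝ}

theorem mul_rpow_sub_one_mul_le (ha : 1 ≤ a) (hx : 0 ≤ x) (hy : 0 ≤ y) :
    a * (x ^ (a - 1) * y) ≤ (a - 1) * x ^ a + y ^ a := by
  have ha₀ : 0 < a := by linarith
  have hyoung : x ^ (a - 1) * y ≤ (a - 1) / a * x ^ a + 1 / a * y ^ a := by
    have h := geom_mean_le_arith_mean2_weighted (div_nonneg (sub_nonneg.2 ha) ha₀.le)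
      (one_div_nonneg.2 ha₀.le) (rpow_nonneg hx a) (rpow_nonneg hy a) (by field_simp; ring)
    rwa [← rpow_mul hx, ← rpow_mul hy, mul_div_cancel₀ _ ha₀.ne', mul_one_div_cancel ha₀.ne',
      rpow_one] at h
  calc a * (x ^ (a - 1) * y) ≤ a * ((a - 1) / a * x ^ a + 1 / a * y ^ a) := by gcongr
    _ = (a - 1) * x ^ a + y ^ a := by field_simp

theorem rpow_sub_one_mul_add_le_two_mul_powerMean (ha : 1 ≤ a) (hu : 0 ≤ u) (hv : 0 ≤ v)
    (huv : u ^ a + v ^ a = 2) (hx : 0 ≤ x) (hy : 0 ≤ y) :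
    u ^ (a - 1) * x + v ^ (a - 1) * y ≤ 2 * powerMean a x y := by
  have ha₀ : 0 < a := by linarith
  have hM := powerMean_nonneg (a := a) hx hy
  have hxy := div_powerMean_rpow_add_div_powerMean_rpow ha₀.ne' hx hy
  have hzero := (powerMean_eq_zero_iff ha₀ hx hy).1
  set M := powerMean a x y
  rcases hM.eq_or_lt' with hM₀ | hM₀
  · obtain ⟨rfl, rfl⟩ := hzero hM₀
    simpa using hM
  have hx' := mul_rpow_sub_one_mul_le ha hu (div_nonneg hx hM)
  have hy' := mul_rpow_sub_one_mul_le ha hv (div_nonneg hy hM)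
  have hsum : u ^ (a - 1) * (x / M) + v ^ (a - 1) * (y / M) ≤ 2 :=
    le_of_mul_le_mul_left (by linear_combination hx' + hy' + (a - 1) * huv + hxy hM₀.ne') ha₀
  calc u ^ (a - 1) * x + v ^ (a - 1) * y
      = (u ^ (a - 1) * (x / M) + v ^ (a - 1) * (y / M)) * M := by field_simp
    _ ≤ 2 * M := by gcongr

theorem exists_powerMean_eq_forall_le_powerMean (ha : 1 ≤ a) (hu : 0 ≤ u) (hv : 0 ≤ v) :
    ∃ α β : ℝ, 0 ≤ α ∧ 0 ≤ β ∧ powerMean a u v = α * u + β * v ∧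
      ∀ x y : ℝ, 0 ≤ x → 0 ≤ y → α * x + β * y ≤ powerMean a x y := by
  have ha₀ : 0 < a := by linarith
  have hm := powerMean_nonneg (a := a) hu hv
  rcases hm.eq_or_lt' with hm₀ | hm₀
  · exact ⟨0, 0, le_rfl, le_rfl, by simp [hm₀],
      fun x y hx hy => by simpa using powerMean_nonneg hx hy⟩
  have hsum := div_powerMean_rpow_add_div_powerMean_rpow ha₀.ne' hu hv hm₀.ne'
  set m := powerMean a u v
  have hum : 0 ≤ u / m := div_nonneg hu hm
  have hvm : 0 ≤ v / m := div_nonneg hv hm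
  refine ⟨(u / m) ^ (a - 1) / 2, (v / m) ^ (a - 1) / 2, by positivity, by positivity, ?_,
    fun x y hx hy => ?_⟩
  · have hmul {t : ℝ} (ht : 0 ≤ t) : t ^ (a - 1) * t = t ^ a := by
      rw [← rpow_add_one' ht (by linarith), sub_add_cancel]
    calc m = ((u / m) ^ a + (v / m) ^ a) / 2 * m := by rw [hsum]; ring
      _ = ((u / m) ^ (a - 1) * (u / m) + (v / m) ^ (a - 1) * (v / m)) / 2 * m := by
        rw [hmul hum, hmul hvm]
      _ = (u / m) ^ (a - 1) / 2 * u + (v / m) ^ (a - 1) / 2 * v := by field_simp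
  · linarith [rpow_sub_one_mul_add_le_two_mul_powerMean ha hum hvm hsum hx hy]

end Hoelder

section PowerConvexity

variable {a b : ℝ} {s t : Set ℝ} {f g : ℝ → ℝ}

theorem map_mul_add_mul_le_of_convexOn {α β u v : ℝ} (hf : ConvexOn ℝ s f) (h0 : 0 ∈ s)
    (hf0 : f 0 = 0) (hu : u ∈ s) (hv : v ∈ s) (hα : 0 ≤ α) (hβ : 0 ≤ β) (hαβ : α + β ≤ 1) :
    f (α * u + β * v) ≤ α * f u + β * f v := by
  have h := hf.map_sum_le (t := Finset.univ) (w := ![α, β, 1 - (α + β)]) (p := ![u, v, 0])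
    (by simp [Fin.forall_fin_succ, hα, hβ, hαβ]) (by simp [Fin.sum_univ_three])
    (by simp [Fin.forall_fin_succ, hu, hv, h0])
  simpa [Fin.sum_univ_three, hf0] using h

theorem powerConvexOn_of_convexOn (ha : 1 ≤ a) (hf : ConvexOn ℝ s f) (hs : s ⊆ Ici 0)
    (h0 : 0 ∈ s) (hf0 : f 0 = 0) (hf_nonneg : ∀ x ∈ s, 0 ≤ f x) : PowerConvexOn s a a f := by
  intro u hu v hv
  obtain ⟨α, β, hα, hβ, heq, hle⟩ := exists_powerMean_eq_forall_le_powerMean ha (hs hu) (hs hv)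
  have hαβ : α + β ≤ 1 := by
    simpa [powerMean_self (zero_lt_one.trans_le ha).ne'] using hle 1 1 zero_le_one zero_le_one
  calc f (powerMean a u v) = f (α * u + β * v) := by rw [heq]
    _ ≤ α * f u + β * f v := map_mul_add_mul_le_of_convexOn hf h0 hf0 hu hv hα hβ hαβ
    _ ≤ powerMean a (f u) (f v) := hle _ _ (hf_nonneg u hu) (hf_nonneg v hv)

theorem powerMean_mem_of_ordConnected (hs : s.OrdConnected) (hs0 : s ⊆ Ici 0) (ha : 0 < a) {x y : ℝ}
    (hx : x ∈ s) (hy : y ∈ s) : powerMean a x y ∈ s :=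
  hs.uIcc_subset hx hy (powerMean_mem_uIcc ha (hs0 hx) (hs0 hy))

theorem PowerConvexOn.powerConcaveOn_of_rightInvOn (hf : PowerConvexOn s a b f)
    (hf_mono : StrictMonoOn f s) (hg : MapsTo g t s) (hfg : RightInvOn g f t)
    (hs : ∀ x ∈ s, ∀ y ∈ s, powerMean a x y ∈ s)
    (ht : ∀ x ∈ t, ∀ y ∈ t, powerMean b x y ∈ t) :
    PowerConcaveOn t b a g := by
  intro x hx y hy
  have hm := ht x hx y hy
  refine (hf_mono.le_iff_le (hs _ (hg hx) _ (hg hy)) (hg hm)).1 ?_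
  calc f (powerMean a (g x) (g y)) ≤ powerMean b (f (g x)) (f (g y)) := hf (hg hx) (hg hy)
    _ = f (g (powerMean b x y)) := by rw [hfg hx, hfg hy, hfg hm]

end PowerConvexity

section ArcsinPQ

/-- The integrand of `arcsinPQ p q`, which is its derivative on `[0, 1)`. -/
noncomputable def arcsinPQDeriv (p q t : ℝ) : ℝ := (1 - t ^ q) ^ (-(1 / p))

variable {p q x y : ℝ}

theorem arcsinPQDeriv_pos (hq : 0 < q) (hx : x ∈ Ico 0 1) : 0 < arcsinPQDeriv p q x :=
  rpow_pos_of_pos (sub_pos.2 (rpow_lt_one hx.1 hx.2 hq)) _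

theorem monotoneOn_arcsinPQDeriv (hp : 0 ≤ p) (hq : 0 < q) :
    MonotoneOn (arcsinPQDeriv p q) (Ico 0 1) := fun _ hx _ hy hxy =>
  rpow_le_rpow_of_nonpos (sub_pos.2 (rpow_lt_one hy.1 hy.2 hq))
    (sub_le_sub_left (rpow_le_rpow hx.1 hxy hq.le) 1) (neg_nonpos.2 (one_div_nonneg.2 hp))

theorem one_le_arcsinPQDeriv (hp : 0 ≤ p) (hq : 0 < q) (hx : x ∈ Ico 0 1) :
    1 ≤ arcsinPQDeriv p q x := by
  simpa [arcsinPQDeriv, zero_rpow hq.ne'] using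
    monotoneOn_arcsinPQDeriv hp hq (left_mem_Ico.2 one_pos) hx hx.1

theorem continuousAt_arcsinPQDeriv (hq : 0 < q) (hx : x ∈ Ico 0 1) :
    ContinuousAt (arcsinPQDeriv p q) x :=
  (continuousAt_const.sub (continuousAt_rpow_const x q (Or.inr hq.le))).rpow_const
    (Or.inl (sub_pos.2 (rpow_lt_one hx.1 hx.2 hq)).ne')

theorem measurable_arcsinPQDeriv : Measurable (arcsinPQDeriv p q) := by
  unfold arcsinPQDeriv
  fun_prop

theorem intervalIntegrable_arcsinPQDeriv (hq : 0 < q) (hx : x ∈ Ico 0 1) :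
    IntervalIntegrable (arcsinPQDeriv p q) MeasureTheory.volume 0 x := by
  refine ContinuousOn.intervalIntegrable fun t ht => ?_
  rw [uIcc_of_le hx.1] at ht
  exact (continuousAt_arcsinPQDeriv hq ⟨ht.1, ht.2.trans_lt hx.2⟩).continuousWithinAt

theorem arcsinPQ_zero : arcsinPQ p q 0 = 0 :=
  intervalIntegral.integral_same

theorem hasDerivAt_arcsinPQ (hq : 0 < q) (hx : x ∈ Ico 0 1) :
    HasDerivAt (arcsinPQ p q) (arcsinPQDeriv p q x) x :=
  intervalIntegral.integral_hasDerivAt_right (intervalIntegrable_arcsinPQDeriv hq hx)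
    measurable_arcsinPQDeriv.stronglyMeasurable.stronglyMeasurableAtFilter
    (continuousAt_arcsinPQDeriv hq hx)

theorem continuousOn_arcsinPQ (hq : 0 < q) : ContinuousOn (arcsinPQ p q) (Ico 0 1) :=
  fun _ hx => (hasDerivAt_arcsinPQ hq hx).continuousAt.continuousWithinAt

theorem convexOn_arcsinPQ (hp : 0 ≤ p) (hq : 0 < q) : ConvexOn ℝ (Ico 0 1) (arcsinPQ p q) := by
  refine MonotoneOn.convexOn_of_deriv (convex_Ico 0 1) (continuousOn_arcsinPQ hq)
    (fun x hx => (hasDerivAt_arcsinPQ hq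
      (interior_subset hx)).differentiableAt.differentiableWithinAt) ?_
  exact ((monotoneOn_arcsinPQDeriv hp hq).mono interior_subset).congr fun x hx =>
    (hasDerivAt_arcsinPQ hq (interior_subset hx)).deriv.symm

theorem arcsinPQ_lt_arcsinPQ (hq : 0 < q) (hx : 0 ≤ x) (hxy : x < y) (hy : y ≤ 1)
    (hint : IntervalIntegrable (arcsinPQDeriv p q) MeasureTheory.volume 0 y) :
    arcsinPQ p q x < arcsinPQ p q y := by
  have hint_x := intervalIntegrable_arcsinPQDeriv (p := p) hq ⟨hx, hxy.trans_le hy⟩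
  refine sub_pos.1 ?_
  calc 0 < ∫ t in x..y, arcsinPQDeriv p q t :=
        intervalIntegral.intervalIntegral_pos_of_pos_on (hint_x.symm.trans hint)
          (fun t ht => arcsinPQDeriv_pos hq ⟨hx.trans ht.1.le, ht.2.trans_le hy⟩) hxy
    _ = arcsinPQ p q y - arcsinPQ p q x :=
        (intervalIntegral.integral_interval_sub_left hint hint_x).symm

theorem strictMonoOn_arcsinPQ (hq : 0 < q) : StrictMonoOn (arcsinPQ p q) (Ico 0 1) :=
  fun _ hx _ hy hxy =>
    arcsinPQ_lt_arcsinPQ hq hx.1 hxy hy.2.le (intervalIntegrable_arcsinPQDeriv hq hy)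

theorem arcsinPQ_pos (hq : 0 < q) (hx : x ∈ Ioo 0 1) : 0 < arcsinPQ p q x :=
  arcsinPQ_zero.symm.trans_lt
    (strictMonoOn_arcsinPQ hq (left_mem_Ico.2 one_pos) (Ioo_subset_Ico_self hx) hx.1)

theorem arcsinPQ_nonneg (hq : 0 < q) (hx : x ∈ Ico 0 1) : 0 ≤ arcsinPQ p q x :=
  arcsinPQ_zero.symm.trans_le
    ((strictMonoOn_arcsinPQ hq).monotoneOn (left_mem_Ico.2 one_pos) hx hx.1)

theorem le_arcsinPQ (hp : 0 ≤ p) (hq : 0 < q) (hx : x ∈ Ico 0 1) : x ≤ arcsinPQ p q x :=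
  calc x = ∫ _ in (0 : ℝ)..x, (1 : ℝ) := by simp
    _ ≤ arcsinPQ p q x :=
      intervalIntegral.integral_mono_on hx.1 intervalIntegrable_const
        (intervalIntegrable_arcsinPQDeriv hq hx)
        fun _ ht => one_le_arcsinPQDeriv hp hq ⟨ht.1, ht.2.trans_lt hx.2⟩

theorem powerConvexOn_arcsinPQ {a : ℝ} (hp : 0 ≤ p) (hq : 0 < q) (ha : 1 ≤ a) :
    PowerConvexOn (Ico 0 1) a a (arcsinPQ p q) :=
  powerConvexOn_of_convexOn ha (convexOn_arcsinPQ hp hq) (fun _ hx => hx.1)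
    (left_mem_Ico.2 one_pos) arcsinPQ_zero fun _ => arcsinPQ_nonneg hq

theorem Ioo_subset_image_arcsinPQ (hp : 0 ≤ p) (hq : 0 < q) :
    Ioo 0 1 ⊆ arcsinPQ p q '' Ioo 0 1 := by
  intro r hr
  have hcont : ContinuousOn (arcsinPQ p q) (Icc 0 r) :=
    (continuousOn_arcsinPQ hq).mono (Icc_subset_Ico_right hr.2)
  have hmem : r ∈ Ioc (arcsinPQ p q 0) (arcsinPQ p q r) :=
    ⟨arcsinPQ_zero.trans_lt hr.1, le_arcsinPQ hp hq (Ioo_subset_Ico_self hr)⟩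
  exact image_mono (Ioc_subset_Ioo_right hr.2) (intermediate_value_Ioc hr.1.le hcont hmem)

theorem ordConnected_image_arcsinPQ (hq : 0 < q) :
    (arcsinPQ p q '' Ioo 0 1).OrdConnected :=
  (isPreconnected_Ioo.image _ ((continuousOn_arcsinPQ hq).mono Ioo_subset_Ico_self)).ordConnected

end ArcsinPQ

section SinPQ

variable {p q : ℝ}

theorem arcsinPQ_one_notMem_image (hq : 0 < q) : arcsinPQ p q 1 ∉ arcsinPQ p q '' Ioo 0 1 := by
  rintro ⟨x, hx, hx1⟩
  by_cases hint : IntervalIntegrable (arcsinPQDeriv p q) MeasureTheory.volume 0 1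
  · exact (arcsinPQ_lt_arcsinPQ hq hx.1.le hx.2 le_rfl hint).ne hx1
  · -- If the integral diverges, then `arcsinPQ p q 1` is the junk value `0`.
    exact (arcsinPQ_pos hq hx).ne' (hx1.trans (intervalIntegral.integral_undef hint))

theorem rightInvOn_sinPQ : RightInvOn (sinPQ p q) (arcsinPQ p q) (arcsinPQ p q '' Ioo 0 1) :=
  fun _ hr => Function.invFunOn_eq (image_mono Ioo_subset_Icc_self hr)

theorem mapsTo_sinPQ (hq : 0 < q) :
    MapsTo (sinPQ p q) (arcsinPQ p q '' Ioo 0 1) (Ico 0 1) := by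
  intro r hr
  have hmem : sinPQ p q r ∈ Icc 0 1 := Function.invFunOn_mem (image_mono Ioo_subset_Icc_self hr)
  refine ⟨hmem.1, hmem.2.lt_of_ne fun h1 => arcsinPQ_one_notMem_image (p := p) hq ?_⟩
  have heq : arcsinPQ p q 1 = r := h1 ▸ rightInvOn_sinPQ hr
  exact heq ▸ hr

end SinPQ

/-- For `p > 1` the interval `arcsinPQ p q '' Ioo 0 1` is `(0, π_{p,q}/2)`; for `p ≤ 1`, where the
integral defining `π_{p,q}` diverges, it is `(0, ∞)`. -/
theorem sinPQ_aa_concave_general {p q a : ℝ} (hp : 0 < p) (hq : 0 < q) (ha : 1 ≤ a) :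
    PowerConcaveOn (arcsinPQ p q '' Ioo 0 1) a a (sinPQ p q) := by
  have ha₀ : 0 < a := by linarith
  have himage_nonneg : arcsinPQ p q '' Ioo 0 1 ⊆ Ici 0 :=
    image_subset_iff.2 fun _ hx => (arcsinPQ_pos hq hx).le
  exact (powerConvexOn_arcsinPQ hp.le hq ha).powerConcaveOn_of_rightInvOn
    (strictMonoOn_arcsinPQ hq) (mapsTo_sinPQ hq) rightInvOn_sinPQ
    (fun _ hx _ hy => powerMean_mem_of_ordConnected ordConnected_Ico (fun _ h => h.1) ha₀ hx hy)
    fun _ hr _ hs =>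
      powerMean_mem_of_ordConnected (ordConnected_image_arcsinPQ hq) himage_nonneg ha₀ hr hs

theorem sinPQ_aa_concave (p q a : ℝ) (hp : 1 < p) (hq : 1 < q) (ha : 1 ≤ a)
    (r s : ℝ) (hr : r ∈ Set.Ioo (0:ℝ) 1) (hs : s ∈ Set.Ioo (0:ℝ) 1) :
    sinPQ p q (((r ^ a + s ^ a) / 2) ^ (1/a)) ≥
      ((sinPQ p q r ^ a + sinPQ p q s ^ a) / 2) ^ (1/a) := by
  have hp₀ : 0 < p := by linarith
  have hq₀ : 0 < q := by linarith
  have hsub := Ioo_subset_image_arcsinPQ hp₀.le hq₀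
  exact sinPQ_aa_concave_general hp₀ hq₀ ha (hsub hr) (hsub hs)
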